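/- For all g, h ∈ W, the Cotlar-type identity P_{≥2}[T_π(g) T_π^op(h)] = P_{≥2}[T_π(g T_π^op(h)) + T_π^op(T_π(g) h) − T_π T_π^op(gh)] holds. -/

import Mathlib

open scoped BigOperators ENNReal

universe u

/-- Ambient data for (the weak*-dense part of) an amalgamated free product
`(A, τ) = *_{i ∈ I, B} (A_i, τ_i)` of finite von Neumann algebras `A_i` with normal faithful
normalized traces over a common von Neumann subalgebra `B`, together with the trace-preserving
conditional expectation `E : A → B` and the family of noncommutative `L_p`-(matrix) norms
(encoding Pisier's natural operator space structure on `L_p(A)`); the carrier `A` plays the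
role of the weak*-dense *-subalgebra `W`, which is linearly spanned by `B` together with the
reduced words in the centered parts of the `A_i`. -/
structure AmalgSetting : Type (u + 1) where
  I : Type u
  A : Type u
  [ringA : Ring A]
  [algA : Algebra ℂ A]
  [starA : StarRing A]
  [smodA : StarModule ℂ A]
  B : Subalgebra ℂ A
  Ai : I → Subalgebra ℂ A
  B_le : ∀ i, B ≤ Ai i
  star_B : ∀ x ∈ B, star x ∈ B
  star_Ai : ∀ i, ∀ x ∈ Ai i, star x ∈ Ai i
  E : A →ₗ[ℂ] A
  E_mem : ∀ x, E x ∈ B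
  E_fix : ∀ x ∈ B, E x = x
  E_bimod : ∀ b₁ ∈ B, ∀ b₂ ∈ B, ∀ x, E (b₁ * x * b₂) = b₁ * E x * b₂
  E_star : ∀ x, E (star x) = star (E x)
  tr : A →ₗ[ℂ] ℂ
  tr_one : tr 1 = 1
  tr_comm : ∀ x y, tr (x * y) = tr (y * x)
  tr_E : ∀ x, tr (E x) = tr x
  tr_pos : ∀ x, 0 ≤ (tr (star x * x)).re
  tr_faithful : ∀ x, tr (star x * x) = 0 → x = 0
  N : ℝ≥0∞ → (n : ℕ) → Matrix (Fin n) (Fin n) A → ℝ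
  N_nonneg : ∀ p n x, 0 ≤ N p n x
  N_add : ∀ p n x y, 1 ≤ p → N p n (x + y) ≤ N p n x + N p n y
  N_smul : ∀ p n (c : ℂ) x, N p n (c • x) = ‖c‖ * N p n x
  N_two : ∀ n (x : Matrix (Fin n) (Fin n) A),
    N 2 n x ^ 2 = ∑ k, ∑ l, (tr (star (x k l) * x k l)).re
  span_words : ∀ x : A, x ∈ Submodule.span ℂ
      ((B : Set A) ∪ {y | ∃ w : List I, w.Chain' (· ≠ ·) ∧ ∃ a : Fin w.length → A,
        (∀ j, a j ∈ Ai (w.get j) ∧ E (a j) = 0) ∧ y = (List.ofFn a).prod})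

attribute [instance] AmalgSetting.ringA AmalgSetting.algA AmalgSetting.starA AmalgSetting.smodA

namespace AmalgSetting

variable (S : AmalgSetting)

/-- The centered part `Å_i = {x ∈ A_i : E x = 0}` of `A_i`. -/
def cent (i : S.I) : Set S.A := {x | x ∈ S.Ai i ∧ S.E x = 0}

/-- `x` is an elementary tensor `a_1 ⊗ ⋯ ⊗ a_n` (realized in `A` as the product
`a_1 ⋯ a_n` of centered letters) along the word `w = (i_1, …, i_n)`. -/
def IsElemWord (w : List S.I) (x : S.A) : Prop :=
  ∃ a : Fin w.length → S.A, (∀ j, a j ∈ S.cent (w.get j)) ∧ x = (List.ofFn a).prod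

/-- A reduced word: adjacent indices are distinct. -/
def Reduced (w : List S.I) : Prop := w.Chain' (· ≠ ·)

/-- The summand `W_{(i_1,…,i_n)} = Å_{i_1} ⊗_B ⋯ ⊗_B Å_{i_n}` of `W` (and `W_{()} = B`). -/
def Wword : List S.I → Submodule ℂ S.A
  | [] => Subalgebra.toSubmodule S.B
  | w => Submodule.span ℂ {x | S.IsElemWord w x}

/-- The homogeneous part `W_n` of `W`. -/
def Wn (n : ℕ) : Submodule ℂ S.A :=
  ⨆ (w : List S.I) (_ : w.length = n ∧ S.Reduced w), S.Wword w

/-- The scalar `L_p`-norm. -/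
def nrm (p : ℝ≥0∞) (x : S.A) : ℝ := S.N p 1 (fun _ _ => x)

/-- `T` is completely bounded on `L_p(A)` with cb-norm at most `C`, i.e. all matrix
amplifications of `T` are bounded by `C` (so that the bounded linear extension of `T` to
`L_p(A)` is completely bounded with `‖T‖_{cb(L_p(A))} ≤ C`). -/
def IsCBWith (p : ℝ≥0∞) (T : S.A →ₗ[ℂ] S.A) (C : ℝ) : Prop :=
  ∀ (n : ℕ) (x : Matrix (Fin n) (Fin n) S.A), S.N p n (x.map T) ≤ C * S.N p n x

/-- `T` is completely bounded with constant `C` on the subspace `L_p(V)` of `L_p(A)`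
corresponding to a subalgebra `V ⊆ A` (e.g. `V = A_i`). -/
def IsCBOnWith (p : ℝ≥0∞) (V : Subalgebra ℂ S.A) (T : S.A →ₗ[ℂ] S.A) (C : ℝ) : Prop :=
  ∀ (n : ℕ) (x : Matrix (Fin n) (Fin n) S.A), (∀ k l, x k l ∈ V) →
    S.N p n (x.map T) ≤ C * S.N p n x

end AmalgSetting

namespace AmalgSetting

variable (S : AmalgSetting)

/-- The "opposite" companion `T^op(x) = (T(x*))*` of a map `T`. -/
def opConj (T : S.A →ₗ[ℂ] S.A) : S.A →ₗ[ℂ] S.A where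
  toFun x := star (T (star x))
  map_add' x y := by simp [star_add, map_add]
  map_smul' c x := by simp [star_smul, map_smul, smul_smul]

/-- A family `π = (π_i)` of *-representations `π_i : A_i → A_i` fixing `B` pointwise
and commuting with the conditional expectation `E`. -/
structure RepFamily where
  π : S.I → S.A →ₗ[ℂ] S.A
  mem : ∀ i, ∀ x ∈ S.Ai i, π i x ∈ S.Ai i
  map_mul : ∀ i, ∀ x ∈ S.Ai i, ∀ y ∈ S.Ai i, π i (x * y) = π i x * π i y
  map_star : ∀ i, ∀ x ∈ S.Ai i, π i (star x) = star (π i x)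
  fix_B : ∀ i, ∀ b ∈ S.B, π i b = b
  E_comm : ∀ i, ∀ x ∈ S.Ai i, S.E (π i x) = S.E x

/-- `T` is the map `T_π` acting on the first letter of reduced words:
`T_π(b) = b` for `b ∈ B`, and `T_π(a_1 ⊗ ⋯ ⊗ a_n) = π_{i_1}(a_1) ⊗ a_2 ⊗ ⋯ ⊗ a_n`. -/
def IsTpi (P : S.RepFamily) (T : S.A →ₗ[ℂ] S.A) : Prop :=
  (∀ b ∈ S.B, T b = b) ∧
  ∀ w : List S.I, S.Reduced w → ∀ a : Fin w.length → S.A,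
    (∀ j, a j ∈ S.cent (w.get j)) →
    T ((List.ofFn a).prod) =
      (List.ofFn fun j : Fin w.length =>
        if (j : ℕ) = 0 then P.π (w.get j) (a j) else a j).prod

/-- `P` is the projection `P_{≥2} = Id − P_0 − P_1` onto words of length at least `2`. -/
def IsPge2 (P : S.A →ₗ[ℂ] S.A) : Prop :=
  (∀ x ∈ S.Wn 0, P x = 0) ∧ (∀ x ∈ S.Wn 1, P x = 0) ∧
  ∀ n, 2 ≤ n → ∀ x ∈ S.Wn n, P x = x

/-- `P` is the natural projection `P_1 : W → W_1`. -/
def IsP1 (P : S.A →ₗ[ℂ] S.A) : Prop :=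
  (∀ x ∈ S.Wn 1, P x = x) ∧ ∀ n, n ≠ 1 → ∀ x ∈ S.Wn n, P x = 0

/-- `Q` is the family of natural projections of `W` onto the word components
`W_{(i_1,…,i_n)}` (with `Q_{()}` the projection onto `B`, i.e. `E`). -/
def IsWordProj (Q : List S.I → S.A →ₗ[ℂ] S.A) : Prop :=
  (∀ w, S.Reduced w → ∀ x ∈ S.Wword w, Q w x = x) ∧
  (∀ w w', S.Reduced w → S.Reduced w' → w ≠ w' → ∀ x ∈ S.Wword w', Q w x = 0) ∧
  (∀ w, ¬ S.Reduced w → Q w = 0) ∧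
  (∀ x, (Function.support fun w => Q w x).Finite) ∧
  (∀ x, ∑ᶠ w, Q w x = x)

end AmalgSetting

/-!
The Cotlar defect `D(g, h) = T(g) T^op(h) - T(g T^op(h)) - T^op(T(g) h) + T(T^op(g h))` lies in
`W_0 + W_1`, on which `P_{≥2}` vanishes. By bilinearity `g` and `h` may be taken to be reduced
words; let `p ∈ A_i` be the last letter of `g = v p`. If `h` does not lie in `A_i`, then
`T^op(p h) = p T^op(h)`, and `p` can be moved across the comma, `D(v p, h) = D(v, p h)`, which
shortens `g` until it is a single letter, where `D(p, h) = 0`. If `h` lies in `A_i`, then either `g`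
is a single letter and `D(g, h) ∈ A_i ⊆ W_0 + W_1`, or the first letter of `g` is out of reach of
`h` and the defect is the commutator of `T` and `T^op` at `g h`, which vanishes because the two maps
act on opposite ends of a word.
-/

namespace AmalgSetting

variable {S : AmalgSetting}

section Centered

variable {i : S.I} {x b : S.A}

lemma star_mem_cent (hx : x ∈ S.cent i) : star x ∈ S.cent i :=
  ⟨S.star_Ai i x hx.1, by rw [S.E_star, hx.2, star_zero]⟩

lemma mul_mem_cent_of_mem_B (hx : x ∈ S.cent i) (hb : b ∈ S.B) : x * b ∈ S.cent i := by
  refine ⟨(S.Ai i).mul_mem hx.1 (S.B_le i hb), ?_⟩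
  simpa [hx.2] using S.E_bimod 1 S.B.one_mem b hb x

lemma sub_E_mem_cent (hx : x ∈ S.Ai i) : x - S.E x ∈ S.cent i :=
  ⟨(S.Ai i).sub_mem hx (S.B_le i (S.E_mem x)), by rw [map_sub, S.E_fix _ (S.E_mem x), sub_self]⟩

end Centered

section Words

variable {i : S.I} {v w : List S.I} {x b : S.A}

lemma Reduced.reverse (hw : S.Reduced w) : S.Reduced w.reverse :=
  List.isChain_reverse.2 (hw.imp fun _ _ h => h.symm)

lemma Reduced.left_of_append (h : S.Reduced (v ++ w)) : S.Reduced v :=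
  List.IsChain.left_of_append h

lemma Reduced.right_of_append (h : S.Reduced (v ++ w)) : S.Reduced w :=
  List.IsChain.right_of_append h

lemma Reduced.append_singleton {j : S.I} (h : S.Reduced (w ++ [j])) (hji : j ≠ i) :
    S.Reduced (w ++ [j] ++ [i]) := by
  refine List.isChain_append.2 ⟨h, List.isChain_singleton i, ?_⟩
  simpa using hji

lemma isElemWord_nil : S.IsElemWord [] x ↔ x = 1 := by
  simp [IsElemWord]

lemma isElemWord_cons :
    S.IsElemWord (i :: w) x ↔ ∃ a ∈ S.cent i, ∃ y, S.IsElemWord w y ∧ x = a * y := by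
  constructor
  · rintro ⟨a, ha, rfl⟩
    refine ⟨a 0, ha 0, _, ⟨fun j => a j.succ, fun j => ha j.succ, rfl⟩, ?_⟩
    rw [← List.prod_cons, ← List.ofFn_succ]
  · rintro ⟨a, ha, y, ⟨c, hc, rfl⟩, rfl⟩
    refine ⟨Fin.cons (α := fun _ => S.A) a c, Fin.cases ha hc, ?_⟩
    simp [List.ofFn_succ]

lemma isElemWord_singleton : S.IsElemWord [i] x ↔ x ∈ S.cent i := by
  simp [isElemWord_cons, isElemWord_nil]

lemma isElemWord_append :
    S.IsElemWord (v ++ w) x ↔ ∃ y z, S.IsElemWord v y ∧ S.IsElemWord w z ∧ x = y * z := by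
  induction v generalizing x with
  | nil => simp [isElemWord_nil]
  | cons i v ih =>
    simp only [List.cons_append, isElemWord_cons, ih]
    constructor
    · rintro ⟨a, ha, _, ⟨y, z, hy, hz, rfl⟩, rfl⟩
      exact ⟨a * y, z, ⟨a, ha, y, hy, rfl⟩, hz, (mul_assoc a y z).symm⟩
    · rintro ⟨_, z, ⟨a, ha, y, hy, rfl⟩, hz, rfl⟩
      exact ⟨a, ha, y * z, ⟨y, z, hy, hz, rfl⟩, mul_assoc a y z⟩

lemma isElemWord_append_singleton :
    S.IsElemWord (w ++ [i]) x ↔ ∃ y, S.IsElemWord w y ∧ ∃ a ∈ S.cent i, x = y * a := by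
  simp [isElemWord_append, isElemWord_singleton]

lemma IsElemWord.star (hx : S.IsElemWord w x) : S.IsElemWord w.reverse (star x) := by
  induction w generalizing x with
  | nil => simp_all [isElemWord_nil]
  | cons i w ih =>
    obtain ⟨a, ha, y, hy, rfl⟩ := isElemWord_cons.1 hx
    rw [List.reverse_cons, isElemWord_append_singleton, star_mul]
    exact ⟨_, ih hy, _, star_mem_cent ha, rfl⟩

lemma IsElemWord.mul_B (hx : S.IsElemWord w x) (hw : w ≠ []) (hb : b ∈ S.B) :
    S.IsElemWord w (x * b) := by
  obtain rfl | ⟨v, i, rfl⟩ := w.eq_nil_or_concat'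
  · contradiction
  · obtain ⟨y, hy, a, ha, rfl⟩ := isElemWord_append_singleton.1 hx
    exact isElemWord_append_singleton.2
      ⟨y, hy, a * b, mul_mem_cent_of_mem_B ha hb, mul_assoc y a b⟩

lemma eq_top_of_words {V : Submodule ℂ S.A} (hB : ∀ b ∈ S.B, b ∈ V)
    (hw : ∀ w ≠ [], S.Reduced w → ∀ x, S.IsElemWord w x → x ∈ V) : V = ⊤ := by
  refine Submodule.eq_top_iff'.2 fun x => Submodule.span_le.2 ?_ (S.span_words x)
  rintro y (hy | ⟨w, hred, hy⟩)
  · exact hB y hy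
  · rcases eq_or_ne w [] with rfl | hne
    · exact isElemWord_nil.1 hy ▸ hB 1 S.B.one_mem
    · exact hw w hne hred y hy

lemma linearMap_ext_words {f f' : S.A →ₗ[ℂ] S.A} (hB : ∀ b ∈ S.B, f b = f' b)
    (hw : ∀ w ≠ [], S.Reduced w → ∀ x, S.IsElemWord w x → f x = f' x) : f = f' :=
  LinearMap.eqLocus_eq_top.1 (eq_top_of_words hB hw)

lemma mem_Wn_zero (hb : b ∈ S.B) : b ∈ S.Wn 0 :=
  Submodule.mem_iSup_of_mem [] (Submodule.mem_iSup_of_mem ⟨rfl, List.isChain_nil⟩ hb)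

lemma cent_subset_Wn_one (i : S.I) : S.cent i ⊆ S.Wn 1 := fun _ hx =>
  Submodule.mem_iSup_of_mem [i] (Submodule.mem_iSup_of_mem ⟨rfl, List.isChain_singleton i⟩
    (Submodule.subset_span (isElemWord_singleton.2 hx)))

lemma Ai_le_Wn_zero_sup_Wn_one (i : S.I) : (S.Ai i).toSubmodule ≤ S.Wn 0 ⊔ S.Wn 1 := fun x hx =>
  Submodule.mem_sup.2 ⟨S.E x, mem_Wn_zero (S.E_mem x), x - S.E x,
    cent_subset_Wn_one i (sub_E_mem_cent hx), add_sub_cancel _ _⟩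

lemma IsPge2.Wn_zero_sup_Wn_one_le_ker {Q : S.A →ₗ[ℂ] S.A} (hQ : S.IsPge2 Q) :
    S.Wn 0 ⊔ S.Wn 1 ≤ LinearMap.ker Q :=
  sup_le hQ.1 hQ.2.1

end Words

section Equivariance

/-- The elements `g` such that `T` commutes with multiplying `g` on the right by `A_i`. For
`T = T_π` every reduced word outside `A_i` is such an element, its first letter being out of
reach of `A_i`. -/
def rightEquivariant (T : S.A →ₗ[ℂ] S.A) (i : S.I) : Submodule ℂ S.A where
  carrier := {g | ∀ x ∈ S.Ai i, T (g * x) = T g * x}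
  add_mem' hg hg' x hx := by rw [add_mul, map_add, hg x hx, hg' x hx, map_add, add_mul]
  zero_mem' x _ := by simp
  smul_mem' c g hg x hx := by simp [hg x hx]

/-- The elements `h` such that `T` commutes with multiplying `h` on the left by `A_i`, the mirror
image of `rightEquivariant`. It is applied to `T_π^op`. -/
def leftEquivariant (T : S.A →ₗ[ℂ] S.A) (i : S.I) : Submodule ℂ S.A where
  carrier := {h | ∀ x ∈ S.Ai i, T (x * h) = x * T h}
  add_mem' hh hh' x hx := by rw [mul_add, map_add, hh x hx, hh' x hx, map_add, mul_add]
  zero_mem' x _ := by simp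
  smul_mem' c h hh x hx := by simp [hh x hx]

variable {T : S.A →ₗ[ℂ] S.A} {i : S.I} {g p : S.A}

lemma opConj_apply (T : S.A →ₗ[ℂ] S.A) (x : S.A) : S.opConj T x = star (T (star x)) := rfl

lemma star_mem_leftEquivariant (hg : g ∈ rightEquivariant T i) :
    star g ∈ leftEquivariant (S.opConj T) i := fun x hx => by
  rw [opConj_apply, opConj_apply, star_mul, star_star, hg _ (S.star_Ai i x hx), star_mul, star_star]

lemma mul_mem_rightEquivariant (hg : g ∈ rightEquivariant T i) (hp : p ∈ S.Ai i) :
    g * p ∈ rightEquivariant T i := fun x hx => by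
  rw [mul_assoc, hg _ ((S.Ai i).mul_mem hp hx), hg p hp, mul_assoc]

end Equivariance

/-- Linear maps acting like `T_π` on the first letter of reduced words and trivially on `B`. The
action `π_i` on a letter `a ∈ A_i` is encoded as `T a`, and is a `*`-preserving right `B`-linear
map instead of a representation. -/
structure IsFirstLetterMap (T : S.A →ₗ[ℂ] S.A) : Prop where
  fix_B : ∀ b ∈ S.B, T b = b
  mem_Ai : ∀ i, ∀ x ∈ S.Ai i, T x ∈ S.Ai i
  map_star : ∀ i, ∀ x ∈ S.Ai i, T (star x) = star (T x)
  map_mul_B : ∀ i, ∀ x ∈ S.Ai i, ∀ b ∈ S.B, T (x * b) = T x * b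
  map_mul_word : ∀ i w, S.Reduced (i :: w) → ∀ a ∈ S.cent i, ∀ x, S.IsElemWord w x →
    T (a * x) = T a * x

section Tpi

variable {P : S.RepFamily} {T : S.A →ₗ[ℂ] S.A} {i : S.I} {w : List S.I} {a x : S.A}

lemma IsTpi.map_mul_word (hT : S.IsTpi P T) (hw : S.Reduced (i :: w)) (ha : a ∈ S.cent i)
    (hx : S.IsElemWord w x) : T (a * x) = P.π i a * x := by
  obtain ⟨c, hc, rfl⟩ := hx
  have h := hT.2 (i :: w) hw (Fin.cons (α := fun _ => S.A) a c) (Fin.cases ha hc)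
  simpa [List.ofFn_succ] using h

lemma IsTpi.eq_π_of_mem_Ai (hT : S.IsTpi P T) (hx : x ∈ S.Ai i) : T x = P.π i x := by
  have hcent : T (x - S.E x) = P.π i (x - S.E x) := by
    simpa using
      hT.map_mul_word (List.isChain_singleton i) (sub_E_mem_cent hx) (isElemWord_nil.2 rfl)
  rwa [map_sub, map_sub, hT.1 _ (S.E_mem x), P.fix_B i _ (S.E_mem x), sub_left_inj] at hcent

lemma IsTpi.isFirstLetterMap (hT : S.IsTpi P T) : IsFirstLetterMap T where
  fix_B := hT.1
  mem_Ai i x hx := hT.eq_π_of_mem_Ai hx ▸ P.mem i x hx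
  map_star i x hx := by
    rw [hT.eq_π_of_mem_Ai hx, hT.eq_π_of_mem_Ai (S.star_Ai i x hx), P.map_star i x hx]
  map_mul_B i x hx b hb := by
    have hbi := S.B_le i hb
    rw [hT.eq_π_of_mem_Ai hx, hT.eq_π_of_mem_Ai ((S.Ai i).mul_mem hx hbi), P.map_mul i x hx b hbi,
      P.fix_B i b hb]
  map_mul_word i w hw a ha x hx := by rw [hT.map_mul_word hw ha hx, hT.eq_π_of_mem_Ai ha.1]

end Tpi

namespace IsFirstLetterMap

variable {T : S.A →ₗ[ℂ] S.A} {i : S.I} {w : List S.I} {a b x : S.A}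

lemma opConj_eq_of_mem_Ai (hT : IsFirstLetterMap T) (hx : x ∈ S.Ai i) : S.opConj T x = T x := by
  rw [opConj_apply, hT.map_star i x hx, star_star]

lemma opConj_mem_Ai (hT : IsFirstLetterMap T) (hx : x ∈ S.Ai i) : S.opConj T x ∈ S.Ai i :=
  hT.opConj_eq_of_mem_Ai hx ▸ hT.mem_Ai i x hx

lemma opConj_eq_of_mem_B (hT : IsFirstLetterMap T) (hb : b ∈ S.B) : S.opConj T b = b := by
  rw [opConj_apply, hT.fix_B _ (S.star_B b hb), star_star]

lemma opConj_mul_letter (hT : IsFirstLetterMap T) (hw : S.Reduced (w ++ [i]))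
    (hx : S.IsElemWord w x) (ha : a ∈ S.cent i) : S.opConj T (x * a) = x * T a := by
  have hw' : S.Reduced (i :: w.reverse) := by simpa using hw.reverse
  rw [opConj_apply, star_mul, hT.map_mul_word i _ hw' _ (star_mem_cent ha) _ hx.star, star_mul,
    star_star, hT.map_star i a ha.1, star_star]

lemma map_mul_right_of_mem_B (hT : IsFirstLetterMap T) (hb : b ∈ S.B) (x : S.A) :
    T (x * b) = T x * b := by
  suffices T ∘ₗ LinearMap.mulRight ℂ b = LinearMap.mulRight ℂ b ∘ₗ T from
    LinearMap.congr_fun this x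
  refine linearMap_ext_words (fun c hc => ?_) fun w hne hw x hx => ?_
  · simp [hT.fix_B c hc, hT.fix_B _ (S.B.mul_mem hc hb)]
  obtain ⟨i, w, rfl⟩ := List.exists_cons_of_ne_nil hne
  obtain ⟨a, ha, y, hy, rfl⟩ := isElemWord_cons.1 hx
  simp only [LinearMap.comp_apply, LinearMap.mulRight_apply]
  rcases eq_or_ne w [] with rfl | hw'
  · rw [isElemWord_nil.1 hy, mul_one, hT.map_mul_B i a ha.1 b hb]
  · rw [mul_assoc, hT.map_mul_word i w hw a ha _ (hy.mul_B hw' hb),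
      hT.map_mul_word i w hw a ha y hy, mul_assoc]

lemma opConj_mul_left_of_mem_B (hT : IsFirstLetterMap T) (hb : b ∈ S.B) (x : S.A) :
    S.opConj T (b * x) = b * S.opConj T x := by
  rw [opConj_apply, opConj_apply, star_mul, hT.map_mul_right_of_mem_B (S.star_B b hb), star_mul,
    star_star]

lemma word_mem_rightEquivariant (hT : IsFirstLetterMap T) (hw : S.Reduced (w ++ [i]))
    (hne : w ≠ []) (hx : S.IsElemWord w x) : x ∈ rightEquivariant T i := by
  intro y hy
  have hcent : T (x * (y - S.E y)) = T x * (y - S.E y) := by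
    obtain ⟨j, w, rfl⟩ := List.exists_cons_of_ne_nil hne
    obtain ⟨a, ha, z, hz, rfl⟩ := isElemWord_cons.1 hx
    have hzy : S.IsElemWord (w ++ [i]) (z * (y - S.E y)) :=
      isElemWord_append_singleton.2 ⟨z, hz, _, sub_E_mem_cent hy, rfl⟩
    rw [mul_assoc, hT.map_mul_word j _ hw a ha _ hzy,
      hT.map_mul_word j w hw.left_of_append a ha z hz, mul_assoc]
  rwa [mul_sub, mul_sub, map_sub, hT.map_mul_right_of_mem_B (S.E_mem y), sub_left_inj] at hcent

lemma word_mem_leftEquivariant (hT : IsFirstLetterMap T) (hw : S.Reduced (i :: w))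
    (hne : w ≠ []) (hx : S.IsElemWord w x) : x ∈ leftEquivariant (S.opConj T) i := by
  have hw' : S.Reduced (w.reverse ++ [i]) := by simpa using hw.reverse
  simpa using star_mem_leftEquivariant
    (hT.word_mem_rightEquivariant hw' (List.reverse_ne_nil_iff.2 hne) hx.star)

lemma Ai_sup_rightEquivariant (hT : IsFirstLetterMap T) (i : S.I) :
    (S.Ai i).toSubmodule ⊔ rightEquivariant T i = ⊤ := by
  refine eq_top_of_words (fun b hb => Submodule.mem_sup_left (S.B_le i hb)) fun w hne hw x hx => ?_
  obtain rfl | ⟨v, j, rfl⟩ := w.eq_nil_or_concat'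
  · contradiction
  by_cases hji : j = i
  · subst hji
    obtain ⟨y, hy, a, ha, rfl⟩ := isElemWord_append_singleton.1 hx
    rcases eq_or_ne v [] with rfl | hv
    · rw [isElemWord_nil.1 hy, one_mul]
      exact Submodule.mem_sup_left ha.1
    · exact Submodule.mem_sup_right
        (mul_mem_rightEquivariant (hT.word_mem_rightEquivariant hw hv hy) ha.1)
  · exact Submodule.mem_sup_right
      (hT.word_mem_rightEquivariant (hw.append_singleton hji) hne hx)

lemma Ai_sup_leftEquivariant (hT : IsFirstLetterMap T) (i : S.I) :
    (S.Ai i).toSubmodule ⊔ leftEquivariant (S.opConj T) i = ⊤ := by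
  refine Submodule.eq_top_iff'.2 fun h => ?_
  obtain ⟨y, hy, z, hz, hyz⟩ := Submodule.mem_sup.1
    (hT.Ai_sup_rightEquivariant i ▸ Submodule.mem_top (x := star h))
  refine Submodule.mem_sup.2
    ⟨star y, S.star_Ai i y hy, star z, star_mem_leftEquivariant hz, ?_⟩
  rw [← star_add, hyz, star_star]

lemma opConj_comm (hT : IsFirstLetterMap T) (x : S.A) :
    S.opConj T (T x) = T (S.opConj T x) := by
  suffices S.opConj T ∘ₗ T = T ∘ₗ S.opConj T from LinearMap.congr_fun this x
  refine linearMap_ext_words (fun b hb => ?_) fun w hne hw x hx => ?_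
  · simp [hT.fix_B b hb, hT.opConj_eq_of_mem_B hb]
  obtain ⟨i, w, rfl⟩ := List.exists_cons_of_ne_nil hne
  obtain ⟨a, ha, y, hy, rfl⟩ := isElemWord_cons.1 hx
  simp only [LinearMap.comp_apply]
  obtain rfl | ⟨v, j, rfl⟩ := w.eq_nil_or_concat'
  · rw [isElemWord_nil.1 hy, mul_one, hT.opConj_eq_of_mem_Ai ha.1,
      hT.opConj_eq_of_mem_Ai (hT.mem_Ai i a ha.1)]
  obtain ⟨z, hz, c, hc, rfl⟩ := isElemWord_append_singleton.1 hy
  have hw' : S.Reduced ((i :: v) ++ [j]) := hw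
  have haz : S.IsElemWord (i :: v) (a * z) := isElemWord_cons.2 ⟨a, ha, z, hz, rfl⟩
  calc S.opConj T (T (a * (z * c)))
      = S.opConj T (T a * (z * c)) := by rw [hT.map_mul_word i _ hw a ha _ hy]
    _ = T a * S.opConj T (z * c) :=
      hT.word_mem_leftEquivariant hw (by simp) hy _ (hT.mem_Ai i a ha.1)
    _ = T a * (z * T c) := by
      rw [hT.opConj_mul_letter (Reduced.right_of_append (v := [i]) hw) hz hc]
    _ = T (a * z) * T c := by rw [hT.map_mul_word i v hw'.left_of_append a ha z hz, mul_assoc]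
    _ = T (a * z * T c) :=
      (hT.word_mem_rightEquivariant hw' (by simp) haz _ (hT.mem_Ai j c hc.1)).symm
    _ = T (S.opConj T (a * (z * c))) := by rw [← mul_assoc, hT.opConj_mul_letter hw' haz hc]

end IsFirstLetterMap

/-- The failure of the Cotlar identity
`T(g) T^op(h) = T(g T^op(h)) + T^op(T(g) h) - T(T^op(g h))`, as a bilinear map in `g` and `h`. -/
def cotlarDefect (T : S.A →ₗ[ℂ] S.A) : S.A →ₗ[ℂ] S.A →ₗ[ℂ] S.A :=
  LinearMap.mk₂ ℂ
    (fun g h => T g * S.opConj T h -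
      (T (g * S.opConj T h) + S.opConj T (T g * h) - T (S.opConj T (g * h))))
    (fun g g' h => by simp only [add_mul, map_add]; abel)
    (fun c g h => by simp only [smul_mul_assoc, map_smul, smul_add, smul_sub])
    (fun g h h' => by simp only [mul_add, map_add]; abel)
    (fun c g h => by simp only [mul_smul_comm, map_smul, smul_add, smul_sub])

section CotlarDefect

variable {T : S.A →ₗ[ℂ] S.A} {i : S.I} {w : List S.I} {b g h p : S.A}

lemma cotlarDefect_apply (T : S.A →ₗ[ℂ] S.A) (g h : S.A) :
    cotlarDefect T g h = T g * S.opConj T h -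
      (T (g * S.opConj T h) + S.opConj T (T g * h) - T (S.opConj T (g * h))) := rfl

lemma cotlarDefect_mul_left (hgp : T (g * p) = T g * p)
    (hph : S.opConj T (p * h) = p * S.opConj T h) :
    cotlarDefect T (g * p) h = cotlarDefect T g (p * h) := by
  simp only [cotlarDefect_apply, hgp, hph, mul_assoc]

namespace IsFirstLetterMap

lemma cotlarDefect_eq_zero_of_mem_B (hT : IsFirstLetterMap T) (hb : b ∈ S.B) (h : S.A) :
    cotlarDefect T b h = 0 := by
  simp [cotlarDefect_apply, hT.fix_B b hb, hT.opConj_mul_left_of_mem_B hb]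

lemma cotlarDefect_mem_Ai (hT : IsFirstLetterMap T) (hg : g ∈ S.Ai i) (hh : h ∈ S.Ai i) :
    cotlarDefect T g h ∈ S.Ai i := by
  have hTg := hT.mem_Ai i g hg
  have hT'h := hT.opConj_mem_Ai hh
  have hT_gT'h := hT.mem_Ai i _ (mul_mem hg hT'h)
  have hT'_Tgh := hT.opConj_mem_Ai (mul_mem hTg hh)
  have hTT'_gh := hT.mem_Ai i _ (hT.opConj_mem_Ai (mul_mem hg hh))
  exact sub_mem (mul_mem hTg hT'h) (sub_mem (add_mem hT_gT'h hT'_Tgh) hTT'_gh)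

lemma cotlarDefect_eq_zero_of_mem_rightEquivariant (hT : IsFirstLetterMap T)
    (hg : g ∈ rightEquivariant T i) (hh : h ∈ S.Ai i) : cotlarDefect T g h = 0 := by
  rw [cotlarDefect_apply, hg _ (hT.opConj_mem_Ai hh), ← hg h hh, hT.opConj_comm,
    add_sub_cancel_right, sub_self]

lemma cotlarDefect_eq_zero_of_mem_leftEquivariant (hT : IsFirstLetterMap T) (hg : g ∈ S.Ai i)
    (hh : h ∈ leftEquivariant (S.opConj T) i) : cotlarDefect T g h = 0 := by
  rw [cotlarDefect_apply, hh g hg, hh _ (hT.mem_Ai i g hg), add_sub_cancel_left, sub_self]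

lemma cotlarDefect_word_mem_Wn_zero_sup_Wn_one (hT : IsFirstLetterMap T) (hne : w ≠ [])
    (hw : S.Reduced w) (hg : S.IsElemWord w g) (h : S.A) :
    cotlarDefect T g h ∈ S.Wn 0 ⊔ S.Wn 1 := by
  induction w using List.reverseRecOn generalizing g h with
  | nil => contradiction
  | append_singleton v i ih =>
    obtain ⟨y, hy, p, hp, rfl⟩ := isElemWord_append_singleton.1 hg
    obtain ⟨h₁, hh₁, h₂, hh₂, rfl⟩ := Submodule.mem_sup.1
      (hT.Ai_sup_leftEquivariant i ▸ Submodule.mem_top (x := h))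
    rw [map_add]
    rcases eq_or_ne v [] with rfl | hv
    · rw [isElemWord_nil.1 hy, one_mul,
        hT.cotlarDefect_eq_zero_of_mem_leftEquivariant hp.1 hh₂, add_zero]
      exact Ai_le_Wn_zero_sup_Wn_one i (hT.cotlarDefect_mem_Ai hp.1 hh₁)
    · have hyi := hT.word_mem_rightEquivariant hw hv hy
      have hgi := mul_mem_rightEquivariant hyi hp.1
      rw [hT.cotlarDefect_eq_zero_of_mem_rightEquivariant hgi hh₁, zero_add,
        cotlarDefect_mul_left (hyi p hp.1) (hh₂ p hp.1)]
      exact ih hv hw.left_of_append hy (p * h₂)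

end IsFirstLetterMap

end CotlarDefect

end AmalgSetting

open AmalgSetting in
theorem cotlar_type_identity_general (S : AmalgSetting) (T : S.A →ₗ[ℂ] S.A)
    (hT : IsFirstLetterMap T) (g h : S.A) :
    T g * S.opConj T h -
      (T (g * S.opConj T h) + S.opConj T (T g * h) - T (S.opConj T (g * h))) ∈
        S.Wn 0 ⊔ S.Wn 1 := by
  suffices (S.Wn 0 ⊔ S.Wn 1).comap ((cotlarDefect T).flip h) = ⊤ from
    Submodule.eq_top_iff'.1 this g
  refine eq_top_of_words (fun b hb => ?_) fun w hne hw x hx => ?_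
  · simp [hT.cotlarDefect_eq_zero_of_mem_B hb]
  · exact hT.cotlarDefect_word_mem_Wn_zero_sup_Wn_one hne hw hx h

open AmalgSetting in
/-- Cotlar-type formula: for all `g, h ∈ W`,
`P_{≥2}[T_π(g) T_π^op(h)] = P_{≥2}[T_π(g T_π^op(h)) + T_π^op(T_π(g) h) − T_π T_π^op(gh)]`. -/
theorem cotlar_type_identity (S : AmalgSetting) (P : S.RepFamily)
    (Tpi : S.A →ₗ[ℂ] S.A) (hT : S.IsTpi P Tpi)
    (Pge2 : S.A →ₗ[ℂ] S.A) (hP : S.IsPge2 Pge2)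
    (g h : S.A) :
    Pge2 (Tpi g * S.opConj Tpi h) =
      Pge2 (Tpi (g * S.opConj Tpi h) + S.opConj Tpi (Tpi g * h)
        - Tpi (S.opConj Tpi (g * h))) :=
  LinearMap.sub_mem_ker_iff.1
    (hP.Wn_zero_sup_Wn_one_le_ker (cotlar_type_identity_general S Tpi hT.isFirstLetterMap g h))
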